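/- Let P be a finite p-group whose normal p-rank is one, i.e., every elementary abelian normal subgroup of P has rank at most 1 (and P is nontrivial). Then P is cyclic, dihedral of order 2^{n+1} with n ≥ 3, generalized quaternion of order 2^{n+1} with n ≥ 2, or semidihedral of order 2^{n+1} with n ≥ 3. -/

import Mathlib

/-- A group `K` is semidihedral of order `2^(n+1)` if it has generators `c` of order
`2^n` and `x` of order `2` with `x*c*x = c^(2^(n-1)-1)`, generating `K`, and
`|K| = 2^(n+1)`. -/
def IsSemidihedral (K : Type*) [Group K] (n : ℕ) : Prop :=
  ∃ c x : K, orderOf c = 2 ^ n ∧ orderOf x = 2 ∧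
    x * c * x = c ^ (2 ^ (n - 1) - 1) ∧
    Subgroup.closure {c, x} = (⊤ : Subgroup K) ∧ Nat.card K = 2 ^ (n + 1)

/-!
A maximal normal abelian subgroup of `P` is self-centralizing, and normal rank one makes it cyclic,
say `⟨c⟩` of order `p ^ (m + 1)`; each `y : P` acts on it by `c ↦ c ^ r`. If `r ≡ 1 [ZMOD p]`, and
`r ≡ 1 [ZMOD 4]` when `p = 2`, then `1 + r + ⋯ + r ^ (p - 1)` is exactly divisible by `p`. So a
power of such a `y ∉ ⟨c⟩`, corrected by a power of `c`, would give an element `x ∉ ⟨c⟩` of order `p`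
whose commutators all lie in the subgroup `⟨z⟩` of order `p` of `⟨c⟩`, and `⟨z, x⟩` would be a
normal elementary abelian subgroup of rank two. Hence `P = ⟨c⟩` for odd `p`, while for `p = 2` the
index of `⟨c⟩` is at most two and `r ≡ 3 [ZMOD 4]` outside of it. There `r ^ 2 ≡ 1` and the fact
that `x` commutes with `x ^ 2` leave two possibilities each for `c ^ (r + 1)` and `x ^ 2`.
-/

open Subgroup
open scoped commutatorElement

/-! ### Strict one-units -/

section Arithmetic

/-- The integers in the torsion-free subgroup `1 + pℤ_p` (`1 + 4ℤ_2` if `p = 2`) of `ℤ_pˣ`. These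
are the exponents `r` for which the `p`-th powers of the elements `c ^ m * y` can be controlled when
`y` acts on a cyclic `p`-group `⟨c⟩` by `c ↦ c ^ r`. -/
def IsStrictOneUnit (p : ℕ) (r : ℤ) : Prop :=
  (p : ℤ) ∣ r - 1 ∧ (p = 2 → (4 : ℤ) ∣ r - 1)

namespace IsStrictOneUnit

variable {p : ℕ} {r : ℤ}

theorem pow (hr : IsStrictOneUnit p r) (k : ℕ) : IsStrictOneUnit p (r ^ k) :=
  ⟨hr.1.trans (sub_one_dvd_pow_sub_one r k),
    fun hp2 => (hr.2 hp2).trans (sub_one_dvd_pow_sub_one r k)⟩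

theorem exists_geom_sum_eq (hp : p.Prime) (hr : IsStrictOneUnit p r) :
    ∃ u : ℤ, IsCoprime u p ∧ ∑ i ∈ Finset.range p, r ^ i = p * u := by
  rcases hp.eq_two_or_odd' with rfl | hodd
  · obtain ⟨t, ht⟩ := hr.2 rfl
    refine ⟨1 + 2 * t, ⟨1, -t, by push_cast; ring⟩, ?_⟩
    simp only [Finset.sum_range_succ, Finset.sum_range_zero]
    push_cast
    linarith
  · have hpZ : Prime (p : ℤ) := Nat.prime_iff_prime_int.1 hp
    have hpr : ¬ (p : ℤ) ∣ r := fun h => hpZ.not_dvd_one ((dvd_sub_right h).1 hr.1)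
    have hval := emultiplicity_geom_sum₂_eq_one hpZ hodd hr.1 hpr
    simp only [one_pow, mul_one] at hval
    obtain ⟨⟨u, hu⟩, hndvd⟩ := emultiplicity_eq_coe.1 (hval.trans Nat.cast_one.symm)
    rw [pow_one] at hu
    refine ⟨u, ((hpZ.irreducible.coprime_iff_not_dvd).2 fun hpu => hndvd ?_).symm, hu⟩
    rw [hu, pow_succ, pow_one]
    exact mul_dvd_mul_left _ hpu

end IsStrictOneUnit

theorem two_pow_dvd_of_dvd_sub_one_mul {r k : ℤ} {m : ℕ} (hr : r % 4 = 3)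
    (h : (2 : ℤ) ^ (m + 1) ∣ (r - 1) * k) : (2 : ℤ) ^ m ∣ k := by
  obtain ⟨t, ht⟩ : ∃ t, r - 1 = 2 * (2 * t + 1) := ⟨r / 4, by lia⟩
  have hcop : IsCoprime ((2 : ℤ) ^ m) (2 * t + 1) := IsCoprime.pow_left ⟨-t, 1, by ring⟩
  rw [ht, pow_succ', mul_assoc, mul_dvd_mul_iff_left two_ne_zero] at h
  exact hcop.dvd_of_dvd_mul_left h

end Arithmetic

/-! ### Actions on cyclic groups -/

section Action

variable {G : Type*} [Group G] {c x y : G} {r : ℤ}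

theorem semiconjBy_pow_left (h : SemiconjBy y c (c ^ r)) (k : ℕ) :
    SemiconjBy (y ^ k) c (c ^ r ^ k) := by
  induction k with
  | zero => simp
  | succ k ih => simpa only [pow_succ, zpow_mul] using (ih.zpow_right r).mul_left h

theorem semiconjBy_mul_left {s : ℤ} (hx : SemiconjBy x c (c ^ r)) (hy : SemiconjBy y c (c ^ s)) :
    SemiconjBy (x * y) c (c ^ (r * s)) := by
  rw [zpow_mul]
  exact (hx.zpow_right s).mul_left hy

theorem zpow_mul_pow (h : SemiconjBy y c (c ^ r)) (m : ℤ) (k : ℕ) :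
    (c ^ m * y) ^ k = c ^ (m * ∑ i ∈ Finset.range k, r ^ i) * y ^ k := by
  induction k with
  | zero => simp
  | succ k ih =>
    have hyc := (h.zpow_right (m * ∑ i ∈ Finset.range k, r ^ i)).eq
    rw [← zpow_mul] at hyc
    rw [pow_succ', ih, geom_sum_succ, mul_assoc, ← mul_assoc y, hyc, mul_assoc, ← mul_assoc,
      ← zpow_add, ← pow_succ']
    ring_nf

theorem commute_zpow_iff (h : SemiconjBy y c (c ^ r)) (k : ℤ) :
    Commute y (c ^ k) ↔ (orderOf c : ℤ) ∣ (r - 1) * k := by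
  have hyc : y * c ^ k = c ^ (r * k) * y := by rw [zpow_mul]; exact (h.zpow_right k).eq
  rw [orderOf_dvd_iff_zpow_eq_one, commute_iff_eq, hyc, mul_left_inj, ← mul_inv_eq_one,
    ← zpow_neg, ← zpow_add]
  ring_nf

theorem commute_iff_orderOf_dvd (h : SemiconjBy y c (c ^ r)) :
    Commute y c ↔ (orderOf c : ℤ) ∣ r - 1 := by
  simpa using commute_zpow_iff h 1

theorem semiconjBy_zpow_mul (h : SemiconjBy y c (c ^ r)) (k : ℤ) :
    SemiconjBy (c ^ k * y) c (c ^ r) :=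
  SemiconjBy.mul_left ((Commute.refl c).zpow_zpow k r) h

theorem exists_semiconjBy_zpow [(zpowers c).Normal] (y : G) :
    ∃ r : ℤ, SemiconjBy y c (c ^ r) := by
  obtain ⟨r, hr⟩ := mem_zpowers_iff.1
    (Normal.conj_mem inferInstance c (mem_zpowers c) y)
  exact ⟨r, by rw [hr]; exact SemiconjBy.conj_mk y c⟩

theorem normal_zpowers_zpow [(zpowers c).Normal] (k : ℤ) : (zpowers (c ^ k)).Normal := by
  refine ⟨?_⟩
  rintro _ ⟨i, rfl⟩ g
  obtain ⟨r, hr⟩ := exists_semiconjBy_zpow (c := c) g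
  have hgk : SemiconjBy g (c ^ (k * i)) (c ^ (k * (i * r))) := by
    convert hr.zpow_right (k * i) using 1
    rw [← zpow_mul]
    ring_nf
  exact ⟨i * r, by simp only [← zpow_mul, hgk.eq, mul_inv_cancel_right]⟩

-- Conjugations by elements of `G` restrict to commuting automorphisms of the cyclic group `⟨c⟩`.
theorem commute_commutatorElement_of_normal_zpowers [(zpowers c).Normal] (g h : G) :
    Commute ⁅g, h⁆ c := by
  obtain ⟨r, hr⟩ := exists_semiconjBy_zpow (c := c) g⁻¹
  obtain ⟨s, hs⟩ := exists_semiconjBy_zpow (c := c) h⁻¹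
  have hgh : SemiconjBy (g⁻¹ * h⁻¹) c (c ^ (r * s)) := semiconjBy_mul_left hr hs
  have hhg : SemiconjBy (h⁻¹ * g⁻¹) c (c ^ (r * s)) :=
    mul_comm s r ▸ semiconjBy_mul_left hs hr
  have hcomm : Commute ((h⁻¹ * g⁻¹)⁻¹ * (g⁻¹ * h⁻¹)) c :=
    (SemiconjBy.inv_symm_left_iff.2 hhg).mul_left hgh
  simpa [commutatorElement_def, mul_assoc] using hcomm

end Action

/-! ### Normal abelian subgroups -/

section NormalAbelian

variable {G : Type*} [Group G]

theorem normal_sup_zpowers {N : Subgroup G} [N.Normal] {x : G} (hx : ∀ g : G, ⁅g, x⁆ ∈ N) :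
    (N ⊔ zpowers x).Normal := by
  have hle : N ⊔ zpowers x ≤ (N ⊔ zpowers x).normalCore := by
    refine sup_le (normal_le_normalCore.2 le_sup_left) (zpowers_le.2 fun g => ?_)
    rw [show g * x * g⁻¹ = ⁅g, x⁆ * x by simp [commutatorElement_def]]
    exact mul_mem (mem_sup_left (hx g)) (mem_sup_right (mem_zpowers x))
  rw [← (normalCore_le _).antisymm hle]
  infer_instance

theorem isMulCommutative_sup_zpowers {N : Subgroup G} [hN : IsMulCommutative N] {x : G}
    (hx : x ∈ centralizer (N : Set G)) : IsMulCommutative ↥(N ⊔ zpowers x) := by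
  have hxN : zpowers x ≤ centralizer (N : Set G) := zpowers_le.2 hx
  rw [← le_centralizer_iff_isMulCommutative, sup_le_iff]
  exact ⟨le_centralizer_iff.1 (sup_le (le_centralizer_iff_isMulCommutative.2 hN) hxN),
    le_centralizer_iff.1 (sup_le (le_centralizer_iff.1 hxN)
      (le_centralizer_iff_isMulCommutative.2 inferInstance))⟩

-- An element of `C(A)` that is central modulo `A` generates with `A` a normal abelian subgroup, so
-- by maximality it lies in `A`; climb the upper central series.
theorem centralizer_le_of_maximal_isMulCommutative [Group.IsNilpotent G] {A : Subgroup G}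
    (hA : Maximal (fun N : Subgroup G => N.Normal ∧ IsMulCommutative N) A) :
    centralizer (A : Set G) ≤ A := by
  obtain ⟨hnormal, hcomm⟩ := hA.prop
  have hseries (k : ℕ) : centralizer (A : Set G) ⊓ Subgroup.upperCentralSeries G k ≤ A := by
    induction k with
    | zero => simp
    | succ k ih =>
      rintro x ⟨hxA, hxk⟩
      have hgx (g : G) : ⁅g, x⁆ ∈ A :=
        ih ⟨commutator_le_right ⊤ _ (commutator_mem_commutator (mem_top g) hxA), by
          rw [SetLike.mem_coe, mem_toSubmonoid, ← inv_mem_iff, commutatorElement_inv]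
          exact Subgroup.mem_upperCentralSeries_succ_iff.1 hxk g⟩
      exact hA.le_of_ge ⟨normal_sup_zpowers hgx, isMulCommutative_sup_zpowers hxA⟩ le_sup_left
        (mem_sup_right (mem_zpowers x))
  obtain ⟨n, hn⟩ := Group.IsNilpotent.nilpotent G
  simpa only [hn, inf_top_eq] using hseries n

end NormalAbelian

section Cyclic

variable {p : ℕ} {A : Type*} [CommGroup A]

theorem card_ker_powMonoidHom_dvd_pow
    (hcard : Nat.card (powMonoidHom p : A →* A).ker ∣ p) (k : ℕ) :
    Nat.card (powMonoidHom (p ^ k) : A →* A).ker ∣ p ^ k := by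
  induction k with
  | zero => simp [powMonoidHom]
  | succ k ih =>
    set K := (powMonoidHom (p ^ (k + 1)) : A →* A).ker
    have hle : (powMonoidHom p : A →* A).ker ≤ K := fun a ha => by
      simp_all [K, MonoidHom.mem_ker, pow_succ', pow_mul]
    have hmap : K.map (powMonoidHom p) ≤ (powMonoidHom (p ^ k) : A →* A).ker := by
      rintro _ ⟨a, ha, rfl⟩
      simpa [K, MonoidHom.mem_ker, pow_succ', pow_mul] using ha
    rw [← relIndex_bot_left, ← relIndex_mul_relIndex ⊥ _ K bot_le hle, relIndex_bot_left,
      relIndex_ker, pow_succ']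
    exact mul_dvd_mul hcard ((card_dvd_of_le hmap).trans ih)

theorem card_dvd_of_isCyclic_of_forall_pow_eq_one {G : Type*} [Group G] [IsCyclic G]
    (h : ∀ g : G, g ^ p = 1) : Nat.card G ∣ p :=
  IsCyclic.exponent_eq_card (α := G) ▸ Monoid.exponent_dvd_of_forall_pow_eq_one h

theorem isCyclic_of_isCyclic_ker_powMonoidHom [Finite A] [Fact p.Prime]
    (hA : IsPGroup p A) (hker : IsCyclic (powMonoidHom p : A →* A).ker) : IsCyclic A := by
  obtain ⟨k, hk⟩ := isPGroup_iff_exponent_eq_pow.1 hA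
  have hker_top : (powMonoidHom (p ^ k) : A →* A).ker = ⊤ :=
    eq_top_iff.2 fun a _ => by
      simpa [MonoidHom.mem_ker, ← hk] using Monoid.pow_exponent_eq_one a
  have hcard := card_ker_powMonoidHom_dvd_pow
    (card_dvd_of_isCyclic_of_forall_pow_eq_one fun a : (powMonoidHom p : A →* A).ker =>
      Subtype.ext a.2) k
  rw [hker_top, card_top, ← hk] at hcard
  exact IsCyclic.iff_exponent_eq_card.2 (Group.exponent_dvd_nat_card.antisymm hcard)

end Cyclic

/-- Every normal elementary abelian `p`-subgroup of `G` has rank at most one. -/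
def NormalRankLEOne (p : ℕ) (G : Type*) [Group G] : Prop :=
  ∀ N : Subgroup G, N.Normal → (∀ g ∈ N, g ^ p = 1) → (∀ a ∈ N, ∀ b ∈ N, a * b = b * a) →
    IsCyclic N

namespace NormalRankLEOne

variable {p : ℕ} [Fact p.Prime] {G : Type*} [Group G]

theorem mem_zpowers_of_commutatorElement_mem (hG : NormalRankLEOne p G) {z x : G}
    [(zpowers z).Normal] (hz : z ≠ 1) (hzp : z ^ p = 1) (hxp : x ^ p = 1) (hxz : Commute x z)
    (hgx : ∀ g : G, ⁅g, x⁆ ∈ zpowers z) : x ∈ zpowers z := by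
  have hcomm : IsMulCommutative ↥(zpowers z ⊔ zpowers x) :=
    isMulCommutative_sup_zpowers (mem_centralizer_iff.2 (by
      rintro _ ⟨i, rfl⟩
      exact (hxz.zpow_right i).symm.eq))
  have hexp : ∀ g ∈ zpowers z ⊔ zpowers x, g ^ p = 1 := by
    intro g hg
    obtain ⟨_, ⟨i, rfl⟩, _, ⟨j, rfl⟩, rfl⟩ := mem_sup_of_normal_left.1 hg
    have hpow (a : G) (ha : a ^ p = 1) (k : ℤ) : (a ^ k) ^ p = 1 := by
      rw [← zpow_natCast, zpow_comm, zpow_natCast, ha, one_zpow]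
    have hji : Commute (z ^ i) (x ^ j) := (hxz.zpow_zpow j i).symm
    simp only [hji.mul_pow, hpow z hzp, hpow x hxp, mul_one]
  have hcyc : IsCyclic ↥(zpowers z ⊔ zpowers x) :=
    hG _ (normal_sup_zpowers hgx) hexp fun a ha b hb =>
      congrArg Subtype.val (hcomm.is_comm.comm ⟨a, ha⟩ ⟨b, hb⟩)
  have hcard := card_dvd_of_isCyclic_of_forall_pow_eq_one fun g : ↥(zpowers z ⊔ zpowers x) =>
    Subtype.ext (hexp g g.2)
  have := Nat.finite_of_card_ne_zero (ne_zero_of_dvd_ne_zero (Fact.out : p.Prime).ne_zero hcard)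
  have heq : zpowers z = zpowers z ⊔ zpowers x := eq_of_le_of_card_ge le_sup_left (by
    rw [Nat.card_zpowers, orderOf_eq_prime hzp hz]
    exact Nat.le_of_dvd (Fact.out : p.Prime).pos hcard)
  rw [heq]
  exact mem_sup_right (mem_zpowers x)

open scoped IsMulCommutative in
theorem isCyclic [Finite G] (hG : NormalRankLEOne p G) (hp : IsPGroup p G) (A : Subgroup G)
    [A.Normal] [IsMulCommutative A] : IsCyclic A := by
  set K := (powMonoidHom p : A →* A).ker
  have hK (g : G) : g ∈ K.map A.subtype ↔ g ∈ A ∧ g ^ p = 1 := by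
    simp [K, MonoidHom.mem_ker, Subtype.ext_iff, and_comm]
  have hnormal : (K.map A.subtype).Normal := ⟨fun a ha g => by
    rw [hK] at ha ⊢
    exact ⟨Normal.conj_mem inferInstance a ha.1 g, by simp [conj_pow, ha.2]⟩⟩
  have hcyc : IsCyclic (K.map A.subtype) := hG _ hnormal (fun g hg => ((hK g).1 hg).2)
    fun a ha b hb => congrArg Subtype.val
      (mul_comm (⟨a, ((hK a).1 ha).1⟩ : A) ⟨b, ((hK b).1 hb).1⟩)
  exact isCyclic_of_isCyclic_ker_powMonoidHom (hp.to_subgroup A)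
    ((K.equivMapOfInjective _ A.subtype_injective).isCyclic.2 hcyc)

theorem exists_zpowers_normal_centralizer_le [Finite G] [Nontrivial G] (hG : NormalRankLEOne p G)
    (hp : IsPGroup p G) : ∃ c : G, c ≠ 1 ∧ (zpowers c).Normal ∧ centralizer {c} ≤ zpowers c := by
  have := hp.isNilpotent
  obtain ⟨A, -, hA⟩ := Finite.exists_le_maximal
    (p := fun N : Subgroup G => N.Normal ∧ IsMulCommutative N) (a := ⊥)
    ⟨inferInstance, inferInstance⟩
  obtain ⟨hnormal, hcomm⟩ := hA.prop
  obtain ⟨c, rfl⟩ := A.isCyclic_iff_exists_zpowers_eq_top.1 (hG.isCyclic hp A)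
  have hcent : centralizer {c} ≤ zpowers c := by
    simpa only [zpowers_eq_closure, centralizer_closure] using
      centralizer_le_of_maximal_isMulCommutative hA
  refine ⟨c, ?_, hnormal, hcent⟩
  rintro rfl
  obtain ⟨g, hg⟩ := exists_ne (1 : G)
  exact hg (by simpa using hcent (mem_centralizer_singleton_iff.2 (Commute.one_right g)))

end NormalRankLEOne

/-! ### Elements acting by strict one-units -/

section Roots

variable {p : ℕ} {G : Type*} [Group G] {c y : G} {r : ℤ}

theorem exists_pow_notMem_pow_pow_mem (hp : IsPGroup p G) {A : Subgroup G} (hy : y ∉ A) :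
    ∃ k : ℕ, y ^ p ^ k ∉ A ∧ (y ^ p ^ k) ^ p ∈ A := by
  classical
  have hex : ∃ k, y ^ p ^ k ∈ A := by
    obtain ⟨k, hk⟩ := hp y
    exact ⟨k, hk ▸ one_mem A⟩
  have hpos : Nat.find hex ≠ 0 := fun h0 => hy (by simpa [h0] using Nat.find_spec hex)
  refine ⟨Nat.find hex - 1, Nat.find_min hex (by lia), ?_⟩
  rw [← pow_mul, ← pow_succ, Nat.sub_one_add_one hpos]
  exact Nat.find_spec hex

variable [Fact p.Prime]

theorem exists_orderOf_eq_pow_succ (hp : IsPGroup p G) (hc : c ≠ 1) :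
    ∃ m, orderOf c = p ^ (m + 1) := by
  obtain ⟨n, hn⟩ := IsPGroup.iff_orderOf.1 hp c
  rcases n with _ | m
  · exact absurd (orderOf_eq_one_iff.1 (by simpa using hn)) hc
  · exact ⟨m, hn⟩

theorem dvd_of_pow_eq_zpow {n : ℕ} (hc : orderOf c = p ^ n) (hy : SemiconjBy y c (c ^ r))
    (hyc : ¬ Commute y c) {k : ℤ} (hyp : y ^ p = c ^ k) : (p : ℤ) ∣ k := by
  by_contra hpk
  have hcop : IsCoprime ((p : ℤ) ^ n) k := ((Nat.prime_iff_prime_int.1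
    Fact.out).irreducible.coprime_iff_not_dvd.2 hpk).pow_left
  have hcomm : Commute y (c ^ k) := hyp ▸ Commute.self_pow y p
  rw [commute_zpow_iff hy, hc, Nat.cast_pow] at hcomm
  rw [commute_iff_orderOf_dvd hy, hc, Nat.cast_pow] at hyc
  exact hyc (hcop.dvd_of_dvd_mul_right hcomm)

theorem IsStrictOneUnit.exists_zpow_mul_pow_eq_one (hr : IsStrictOneUnit p r)
    (hy : SemiconjBy y c (c ^ r)) {n : ℕ} (hc : orderOf c = p ^ n) {k : ℤ} (hpk : (p : ℤ) ∣ k)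
    (hyp : y ^ p = c ^ k) : ∃ m : ℤ, (c ^ m * y) ^ p = 1 := by
  obtain ⟨u, hup, hsum⟩ := hr.exists_geom_sum_eq Fact.out
  obtain ⟨a, b, hab⟩ := hup.pow_right (n := n)
  obtain ⟨l, rfl⟩ := hpk
  refine ⟨-(a * l), ?_⟩
  rw [zpow_mul_pow hy, hsum, hyp, ← zpow_add, ← orderOf_dvd_iff_zpow_eq_one, hc]
  refine ⟨p * l * b, ?_⟩
  push_cast
  linear_combination (-p * l) * hab

theorem IsStrictOneUnit.dvd_of_zpow_mul_pow_eq_one (hr : IsStrictOneUnit p r)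
    (hy : SemiconjBy y c (c ^ r)) {m : ℕ} (hc : orderOf c = p ^ (m + 1)) {k : ℤ} (hyp : y ^ p = 1)
    (hky : (c ^ k * y) ^ p = 1) : (p : ℤ) ^ m ∣ k := by
  obtain ⟨u, hup, hsum⟩ := hr.exists_geom_sum_eq Fact.out
  have hp0 : (p : ℤ) ≠ 0 := mod_cast (Fact.out : p.Prime).ne_zero
  rw [zpow_mul_pow hy, hsum, hyp, mul_one, ← orderOf_dvd_iff_zpow_eq_one, hc, pow_succ,
    Nat.cast_mul, Nat.cast_pow, mul_left_comm, mul_comm (p : ℤ), mul_dvd_mul_iff_right hp0] at hky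
  exact hup.symm.pow_left.dvd_of_dvd_mul_right hky

theorem dvd_sub_one_of_isPGroup (hp : IsPGroup p G) (hc : p ∣ orderOf c)
    (hy : SemiconjBy y c (c ^ r)) : (p : ℤ) ∣ r - 1 := by
  obtain ⟨k, hk⟩ := hp y
  have hone : Commute (y ^ p ^ k) c := hk ▸ Commute.one_left c
  have hdvd : (p : ℤ) ∣ r ^ p ^ k - 1 := (Int.natCast_dvd_natCast.2 hc).trans
    ((commute_iff_orderOf_dvd (semiconjBy_pow_left hy _)).1 hone)
  rw [← ZMod.intCast_zmod_eq_zero_iff_dvd] at hdvd ⊢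
  simpa [ZMod.pow_card_pow] using hdvd

end Roots

namespace NormalRankLEOne

section Prime

variable {p : ℕ} [Fact p.Prime] {G : Type*} [Group G] {c y : G} {r : ℤ} {m : ℕ}
  [(zpowers c).Normal]

theorem mem_zpowers_of_pow_eq_one (hG : NormalRankLEOne p G)
    (hcent : centralizer {c} ≤ zpowers c) (hc : orderOf c = p ^ (m + 1))
    (hr : IsStrictOneUnit p r) (hy : SemiconjBy y c (c ^ r)) (hyp : y ^ p = 1) :
    y ∈ zpowers c := by
  set z := c ^ (p ^ m : ℤ)
  have horder : orderOf z = p := by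
    rw [show z = c ^ p ^ m by rw [← zpow_natCast, Nat.cast_pow],
      orderOf_pow_of_dvd (pow_ne_zero m (Fact.out : p.Prime).ne_zero)
        (hc ▸ pow_dvd_pow p m.le_succ), hc, Nat.pow_div m.le_succ (Fact.out : p.Prime).pos]
    simp
  have hzp : z ^ p = 1 := by simpa only [horder] using pow_orderOf_eq_one z
  have hz : z ≠ 1 := fun h => (Fact.out : p.Prime).ne_one (by rw [← horder, h, orderOf_one])
  have hyz : Commute y z := by
    rw [commute_zpow_iff hy, hc, pow_succ', Nat.cast_mul, Nat.cast_pow]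
    exact mul_dvd_mul_right hr.1 _
  have hgy (g : G) : ⁅g, y⁆ ∈ zpowers z := by
    obtain ⟨a, ha : c ^ a = ⁅g, y⁆⟩ := hcent
      (mem_centralizer_singleton_iff.2 (commute_commutatorElement_of_normal_zpowers g y))
    have hconj : (c ^ a * y) ^ p = 1 := by
      simp [ha, commutatorElement_def, conj_pow, hyp]
    obtain ⟨l, rfl⟩ := hr.dvd_of_zpow_mul_pow_eq_one hy hc hyp hconj
    exact ⟨l, by rw [← ha, zpow_mul]⟩
  have : (zpowers z).Normal := normal_zpowers_zpow _
  exact zpowers_le.2 (zpow_mem (mem_zpowers c) _)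
    (hG.mem_zpowers_of_commutatorElement_mem hz hzp hyp hyz hgy)

theorem mem_zpowers_of_isStrictOneUnit (hG : NormalRankLEOne p G) (hp : IsPGroup p G)
    (hcent : centralizer {c} ≤ zpowers c) (hc : orderOf c = p ^ (m + 1))
    (hr : IsStrictOneUnit p r) (hy : SemiconjBy y c (c ^ r)) : y ∈ zpowers c := by
  by_contra hyc
  obtain ⟨k, hk, l, hl : c ^ l = (y ^ p ^ k) ^ p⟩ := exists_pow_notMem_pow_pow_mem hp hyc
  have hrk : IsStrictOneUnit p (r ^ p ^ k) := hr.pow _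
  have hyk : SemiconjBy (y ^ p ^ k) c (c ^ r ^ p ^ k) := semiconjBy_pow_left hy _
  have hpl : (p : ℤ) ∣ l := dvd_of_pow_eq_zpow hc hyk
    (fun h => hk (hcent (mem_centralizer_singleton_iff.2 h))) hl.symm
  obtain ⟨a, ha⟩ := hrk.exists_zpow_mul_pow_eq_one hyk hc hpl hl.symm
  exact hk ((mul_mem_cancel_left (zpow_mem (mem_zpowers c) a)).1
    (hG.mem_zpowers_of_pow_eq_one hcent hc hrk (semiconjBy_zpow_mul hyk a) ha))

theorem zpowers_eq_top_of_ne_two (hG : NormalRankLEOne p G) (hp : IsPGroup p G)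
    (hcent : centralizer {c} ≤ zpowers c) (hc : orderOf c = p ^ (m + 1)) (hp2 : p ≠ 2) :
    zpowers c = ⊤ := by
  refine eq_top_iff.2 fun y _ => ?_
  obtain ⟨r, hy⟩ := exists_semiconjBy_zpow (c := c) y
  have hr : IsStrictOneUnit p r :=
    ⟨dvd_sub_one_of_isPGroup hp (hc ▸ dvd_pow_self p m.succ_ne_zero) hy, fun h => (hp2 h).elim⟩
  exact hG.mem_zpowers_of_isStrictOneUnit hp hcent hc hr hy

end Prime

section Two

variable {G : Type*} [Group G] {c x : G} {r : ℤ} {m : ℕ} [(zpowers c).Normal]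

theorem emod_four_eq_three_of_notMem (hG : NormalRankLEOne 2 G) (hp : IsPGroup 2 G)
    (hcent : centralizer {c} ≤ zpowers c) (hc : orderOf c = 2 ^ (m + 1))
    (hxc : SemiconjBy x c (c ^ r)) (hx : x ∉ zpowers c) : r % 4 = 3 := by
  have hodd : ((2 : ℕ) : ℤ) ∣ r - 1 :=
    dvd_sub_one_of_isPGroup hp (hc ▸ dvd_pow_self 2 m.succ_ne_zero) hxc
  have hfour : ¬ (4 : ℤ) ∣ r - 1 := fun h =>
    hx (hG.mem_zpowers_of_isStrictOneUnit hp hcent hc ⟨hodd, fun _ => h⟩ hxc)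
  lia

theorem index_zpowers_eq_two (hG : NormalRankLEOne 2 G) (hp : IsPGroup 2 G)
    (hcent : centralizer {c} ≤ zpowers c) (hc : orderOf c = 2 ^ (m + 1))
    (hx : x ∉ zpowers c) : (zpowers c).index = 2 := by
  refine index_eq_two_iff_exists_notMem_and'.2
    ⟨x, hx, fun y => or_iff_not_imp_right.2 fun hy => ?_⟩
  obtain ⟨r, hxc⟩ := exists_semiconjBy_zpow (c := c) x
  obtain ⟨s, hyc⟩ := exists_semiconjBy_zpow (c := c) y
  have hr : r % 4 = 3 := hG.emod_four_eq_three_of_notMem hp hcent hc hxc hx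
  have hs : s % 4 = 3 := hG.emod_four_eq_three_of_notMem hp hcent hc hyc hy
  have hrs : r * s % 4 = 1 := by rw [Int.mul_emod, hr, hs]; norm_num
  exact hG.mem_zpowers_of_isStrictOneUnit hp hcent hc ⟨by lia, fun _ => by lia⟩
    (semiconjBy_mul_left hxc hyc)

end Two

end NormalRankLEOne

/-! ### Groups with a cyclic subgroup of index two -/

section TwoGroup

variable {G : Type*} [Group G] {c x : G} {r : ℤ} {m : ℕ}

theorem zpow_eq_one_or_eq_pow_two_pow (hc : orderOf c = 2 ^ (m + 1)) {k : ℤ}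
    (hk : (2 : ℤ) ^ m ∣ k) :
    c ^ k = 1 ∨ c ^ k = c ^ 2 ^ m := by
  obtain ⟨l, rfl⟩ := hk
  have hinv : (c ^ 2 ^ m) ^ 2 = 1 := by rw [← pow_mul, ← pow_succ, ← hc, pow_orderOf_eq_one]
  rw [zpow_mul, show c ^ (2 : ℤ) ^ m = c ^ 2 ^ m by exact_mod_cast zpow_natCast c (2 ^ m)]
  rcases l.even_or_odd' with ⟨t, rfl | rfl⟩
  · left; rw [zpow_mul, zpow_ofNat, hinv, one_zpow]
  · right; rw [zpow_add_one, zpow_mul, zpow_ofNat, hinv, one_zpow, one_mul]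

theorem zpow_add_one_eq_one_or_eq_pow_two_pow (hc : orderOf c = 2 ^ (m + 1))
    (hx : SemiconjBy x c (c ^ r)) (hr : r % 4 = 3) (hxx : x ^ 2 ∈ zpowers c) :
    c ^ (r + 1) = 1 ∨ c ^ (r + 1) = c ^ 2 ^ m := by
  obtain ⟨k, hk : c ^ k = x ^ 2⟩ := hxx
  refine zpow_eq_one_or_eq_pow_two_pow hc (two_pow_dvd_of_dvd_sub_one_mul hr ?_)
  have hcomm := (commute_iff_orderOf_dvd (semiconjBy_pow_left hx 2)).1
    (hk ▸ (Commute.refl c).zpow_left k)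
  rw [hc] at hcomm
  convert hcomm using 1
  · push_cast; ring
  · ring

theorem sq_eq_one_or_eq_pow_two_pow (hc : orderOf c = 2 ^ (m + 1)) (hx : SemiconjBy x c (c ^ r))
    (hr : r % 4 = 3) (hxx : x ^ 2 ∈ zpowers c) : x ^ 2 = 1 ∨ x ^ 2 = c ^ 2 ^ m := by
  obtain ⟨k, hk : c ^ k = x ^ 2⟩ := hxx
  rw [← hk]
  refine zpow_eq_one_or_eq_pow_two_pow hc (two_pow_dvd_of_dvd_sub_one_mul hr ?_)
  simpa [hc] using (commute_zpow_iff hx k).1 (hk ▸ Commute.self_pow x 2)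

theorem closure_pair_eq_top (hindex : (zpowers c).index = 2) (hx : x ∉ zpowers c) :
    Subgroup.closure {c, x} = ⊤ := by
  refine eq_top_iff.2 fun y _ => ?_
  have hc : zpowers c ≤ Subgroup.closure {c, x} := zpowers_le.2 (subset_closure (by simp))
  have hx' : x ∈ Subgroup.closure {c, x} := subset_closure (by simp)
  by_cases hy : y ∈ zpowers c
  · exact hc hy
  · exact (mul_mem_cancel_left hx').1 (hc ((mul_mem_iff_of_index_two hindex).2 (by simp [hx, hy])))

end TwoGroup

section Presentation

variable {G : Type*} [Group G] {c x : G}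

theorem exists_zmod_zpow {N : ℕ} (hc : c ^ N = 1) : ∃ φ : ZMod N → G, ∀ k : ℤ, φ k = c ^ k :=
  ⟨fun k => (ZMod.lift N ⟨zmultiplesHom (Additive G) (Additive.ofMul c), by
    simp [← ofMul_pow, hc]⟩ k).toMul, fun k => by simp⟩

theorem zpow_mul_eq_of_inverts (hx : SemiconjBy x c c⁻¹) (k : ℤ) : c ^ k * x = x * c ^ (-k) := by
  have h := (hx.inv_right.zpow_right k).eq
  rw [inv_inv, inv_zpow'] at h
  exact h.symm

open DihedralGroup in
theorem exists_dihedralGroup_hom {N : ℕ} (hc : c ^ N = 1) (hxx : x ^ 2 = 1)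
    (hx : SemiconjBy x c c⁻¹) : ∃ f : DihedralGroup N →* G, f (r 1) = c ∧ f (sr 0) = x := by
  obtain ⟨φ, hφ⟩ := exists_zmod_zpow hc
  have hswap := zpow_mul_eq_of_inverts hx
  rw [sq] at hxx
  let f : DihedralGroup N → G
    | r k => φ k
    | sr k => x * φ k
  have hf (a b : DihedralGroup N) : f (a * b) = f a * f b := by
    rcases a with i | i <;> rcases b with j | j <;>
      obtain ⟨i, rfl⟩ := ZMod.intCast_surjective i <;>
      obtain ⟨j, rfl⟩ := ZMod.intCast_surjective j
    · simp only [f, r_mul_r, ← Int.cast_add, hφ, zpow_add]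
    · simp only [f, r_mul_sr, ← Int.cast_sub, hφ]
      rw [← mul_assoc, hswap, mul_assoc, ← zpow_add, neg_add_eq_sub]
    · simp only [f, sr_mul_r, ← Int.cast_add, hφ, zpow_add, mul_assoc]
    · simp only [f, sr_mul_sr, ← Int.cast_sub, hφ]
      rw [mul_assoc, ← mul_assoc (c ^ i), hswap, mul_assoc, ← zpow_add, ← mul_assoc, hxx, one_mul,
        neg_add_eq_sub]
  refine ⟨MonoidHom.mk' f hf, ?_, ?_⟩
  · simpa [f] using hφ 1
  · simpa [f] using hφ 0

open QuaternionGroup in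
theorem exists_quaternionGroup_hom {N : ℕ} (hc : c ^ (2 * N) = 1) (hxx : x ^ 2 = c ^ N)
    (hx : SemiconjBy x c c⁻¹) : ∃ f : QuaternionGroup N →* G, f (a 1) = c ∧ f (xa 0) = x := by
  obtain ⟨φ, hφ⟩ := exists_zmod_zpow hc
  have hswap := zpow_mul_eq_of_inverts hx
  rw [sq] at hxx
  let f : QuaternionGroup N → G
    | a k => φ k
    | xa k => x * φ k
  have hf (g h : QuaternionGroup N) : f (g * h) = f g * f h := by
    rcases g with i | i <;> rcases h with j | j <;>
      obtain ⟨i, rfl⟩ := ZMod.intCast_surjective i <;>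
      obtain ⟨j, rfl⟩ := ZMod.intCast_surjective j
    · simp only [f, a_mul_a, ← Int.cast_add, hφ, zpow_add]
    · simp only [f, a_mul_xa, ← Int.cast_sub, hφ]
      rw [← mul_assoc, hswap, mul_assoc, ← zpow_add, neg_add_eq_sub]
    · simp only [f, xa_mul_a, ← Int.cast_add, hφ, zpow_add, mul_assoc]
    · simp only [f, xa_mul_xa, ← Int.cast_sub, ← Int.cast_add,
        ← Int.cast_natCast (R := ZMod (2 * N)) N, hφ]
      rw [mul_assoc, ← mul_assoc (c ^ i), hswap, mul_assoc, ← zpow_add, ← mul_assoc, hxx,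
        ← zpow_natCast, ← zpow_add, neg_add_eq_sub, add_sub_assoc]
  refine ⟨MonoidHom.mk' f hf, ?_, ?_⟩
  · simpa [f] using hφ 1
  · simpa [f] using hφ 0

theorem nonempty_mulEquiv_of_hom {D : Type*} [Group D] [Finite D] {f : D →* G}
    (hindex : (zpowers c).index = 2) (hx : x ∉ zpowers c) (hcard : Nat.card D = 2 * orderOf c)
    (hfc : c ∈ f.range) (hfx : x ∈ f.range) :
    Nonempty (G ≃* D) := by
  have hsurj : Function.Surjective f := by
    rw [← MonoidHom.range_eq_top, eq_top_iff, ← closure_pair_eq_top hindex hx, closure_le]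
    rintro _ (rfl | rfl) <;> assumption
  have hbij := hsurj.bijective_of_nat_card_le (by
    rw [hcard, ← (zpowers c).card_mul_index, hindex, Nat.card_zpowers, mul_comm])
  exact ⟨(MulEquiv.ofBijective f hbij).symm⟩

theorem nonempty_mulEquiv_dihedralGroup {N : ℕ} [NeZero N] (hc : orderOf c = N)
    (hindex : (zpowers c).index = 2) (hx : x ∉ zpowers c) (hxx : x ^ 2 = 1)
    (hxc : SemiconjBy x c c⁻¹) : Nonempty (G ≃* DihedralGroup N) := by
  obtain ⟨f, hfc, hfx⟩ := exists_dihedralGroup_hom (hc ▸ pow_orderOf_eq_one c) hxx hxc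
  exact nonempty_mulEquiv_of_hom hindex hx (by rw [DihedralGroup.nat_card, hc]) ⟨_, hfc⟩ ⟨_, hfx⟩

theorem nonempty_mulEquiv_quaternionGroup {N : ℕ} [NeZero N] (hc : orderOf c = 2 * N)
    (hindex : (zpowers c).index = 2) (hx : x ∉ zpowers c) (hxx : x ^ 2 = c ^ N)
    (hxc : SemiconjBy x c c⁻¹) : Nonempty (G ≃* QuaternionGroup N) := by
  obtain ⟨f, hfc, hfx⟩ := exists_quaternionGroup_hom (hc ▸ pow_orderOf_eq_one c) hxx hxc
  refine nonempty_mulEquiv_of_hom hindex hx ?_ ⟨_, hfc⟩ ⟨_, hfx⟩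
  rw [Nat.card_eq_fintype_card, QuaternionGroup.card, hc]
  ring

end Presentation

/-! ### The classification -/

section Classification

variable {G : Type*} [Group G] {c x : G} {r : ℤ} {m : ℕ}

theorem isSemidihedral_of_sq_eq_one (hc : orderOf c = 2 ^ (m + 1)) (hindex : (zpowers c).index = 2)
    (hx : x ∉ zpowers c) (hxx : x ^ 2 = 1) (hxc : SemiconjBy x c (c ^ r))
    (hr : c ^ (r + 1) = c ^ 2 ^ m) : IsSemidihedral G (m + 1) := by
  refine ⟨c, x, hc, orderOf_eq_prime hxx fun h => hx (h ▸ one_mem _), ?_,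
    closure_pair_eq_top hindex hx, ?_⟩
  · rw [hxc.eq, mul_assoc, ← sq, hxx, mul_one, Nat.add_sub_cancel,
      pow_sub c Nat.one_le_two_pow, ← hr, pow_one, zpow_add_one, mul_inv_cancel_right]
  · rw [← (zpowers c).card_mul_index, hindex, Nat.card_zpowers, hc, ← pow_succ]

theorem isSemidihedral_of_zpow_add_one_eq (hc : orderOf c = 2 ^ (m + 1))
    (hindex : (zpowers c).index = 2) (hx : x ∉ zpowers c)
    (hxx : x ^ 2 = 1 ∨ x ^ 2 = c ^ 2 ^ m) (hxc : SemiconjBy x c (c ^ r))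
    (hr : c ^ (r + 1) = c ^ 2 ^ m) : IsSemidihedral G (m + 1) := by
  rcases hxx with hxx | hxx
  · exact isSemidihedral_of_sq_eq_one hc hindex hx hxx hxc hr
  · refine isSemidihedral_of_sq_eq_one (x := c ^ (1 : ℤ) * x) hc hindex ?_ ?_
      (semiconjBy_zpow_mul hxc 1) hr
    · rwa [mul_mem_cancel_left (zpow_mem (mem_zpowers c) 1)]
    · rw [zpow_mul_pow hxc, hxx, Finset.sum_range_succ, Finset.sum_range_one, pow_zero, pow_one,
        one_mul, add_comm, hr, ← pow_add, ← two_mul, ← pow_succ', ← hc, pow_orderOf_eq_one]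

namespace NormalRankLEOne

theorem mem_zpowers_of_orderOf_eq_four (hG : NormalRankLEOne 2 G) (hc : orderOf c = 4)
    (hindex : (zpowers c).index = 2) (hxx : x ^ 2 = 1) : x ∈ zpowers c := by
  have hcard : Nat.card G = 2 ^ 3 := by
    rw [← (zpowers c).card_mul_index, hindex, Nat.card_zpowers, hc]; norm_num
  have hnormal : (zpowers c).Normal := normal_of_index_eq_two hindex
  set z := c ^ (2 : ℤ)
  have hnormal_z : (zpowers z).Normal := normal_zpowers_zpow 2
  have hz : orderOf z = 2 := by
    rw [show z = c ^ 2 from zpow_ofNat c 2, orderOf_pow' c two_ne_zero, hc]; norm_num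
  have hzp : z ^ 2 = 1 := by simpa only [hz] using pow_orderOf_eq_one z
  have hz1 : z ≠ 1 := fun h => by rw [h, orderOf_one] at hz; lia
  have hxz : Commute x z := by
    obtain ⟨r, hxc⟩ := exists_semiconjBy_zpow (c := c) x
    rw [commute_zpow_iff hxc, hc]
    exact mul_dvd_mul_right
      (dvd_sub_one_of_isPGroup (IsPGroup.of_card hcard) (by rw [hc]; norm_num) hxc) 2
  have hquot : IsMulCommutative (G ⧸ zpowers z) := by
    refine IsPGroup.isMulCommutative_of_card_eq_prime_sq (p := 2) ?_
    have hcard_mul := card_eq_card_quotient_mul_card_subgroup (zpowers z)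
    rw [Nat.card_zpowers, hz, hcard] at hcard_mul
    lia
  have hgx (g : G) : ⁅g, x⁆ ∈ zpowers z :=
    Subgroup.Normal.quotient_commutative_iff_commutator_le.1 hquot
      (commutator_mem_commutator (mem_top g) (mem_top x))
  exact zpowers_le.2 (zpow_mem (mem_zpowers c) 2)
    (hG.mem_zpowers_of_commutatorElement_mem hz1 hzp hxx hxz hgx)

theorem dihedral_or_quaternion_or_semidihedral (hG : NormalRankLEOne 2 G) (hp : IsPGroup 2 G)
    [(zpowers c).Normal] (hcent : centralizer {c} ≤ zpowers c) (hc : orderOf c = 2 ^ (m + 1))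
    (hx : x ∉ zpowers c) :
    (2 ≤ m ∧ Nonempty (G ≃* DihedralGroup (2 ^ (m + 1)))) ∨
      (1 ≤ m ∧ Nonempty (G ≃* QuaternionGroup (2 ^ m))) ∨
      (2 ≤ m ∧ IsSemidihedral G (m + 1)) := by
  have hindex : (zpowers c).index = 2 := hG.index_zpowers_eq_two hp hcent hc hx
  obtain ⟨r, hxc⟩ := exists_semiconjBy_zpow (c := c) x
  have hr : r % 4 = 3 := hG.emod_four_eq_three_of_notMem hp hcent hc hxc hx
  have hx2 : x ^ 2 ∈ zpowers c := sq_mem_of_index_two hindex x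
  have hm0 : m ≠ 0 := by
    rintro rfl
    refine hx (hcent (mem_centralizer_singleton_iff.2 ((commute_iff_orderOf_dvd hxc).2 ?_)))
    rw [hc]
    lia
  by_cases hinv : c ^ (r + 1) = 1
  · have hxc_inv : SemiconjBy x c c⁻¹ := by
      rw [zpow_add_one, mul_eq_one_iff_eq_inv] at hinv
      rwa [hinv] at hxc
    rcases sq_eq_one_or_eq_pow_two_pow hc hxc hr hx2 with hxx | hxx
    · have hm1 : m ≠ 1 := by
        rintro rfl
        exact hx (hG.mem_zpowers_of_orderOf_eq_four hc hindex hxx)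
      exact .inl ⟨by lia, nonempty_mulEquiv_dihedralGroup hc hindex hx hxx hxc_inv⟩
    · exact .inr (.inl ⟨by lia,
        nonempty_mulEquiv_quaternionGroup (by rw [hc, pow_succ']) hindex hx hxx hxc_inv⟩)
  · have hpow : c ^ (r + 1) = c ^ 2 ^ m :=
      (zpow_add_one_eq_one_or_eq_pow_two_pow hc hxc hr hx2).resolve_left hinv
    have hm1 : m ≠ 1 := by
      rintro rfl
      refine hinv (orderOf_dvd_iff_zpow_eq_one.1 ?_)
      rw [hc]
      lia
    exact .inr (.inr ⟨by lia, isSemidihedral_of_zpow_add_one_eq hc hindex hx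
      (sq_eq_one_or_eq_pow_two_pow hc hxc hr hx2) hxc hpow⟩)

end NormalRankLEOne

end Classification

/-- A nontrivial finite `p`-group of normal `p`-rank one (every elementary
abelian normal subgroup is cyclic) is cyclic, dihedral (`n ≥ 3`), generalised
quaternion (`n ≥ 2`), or semidihedral (`n ≥ 3`), of order `2^(n+1)` in the last
three cases. -/
theorem stmt_1 (p : ℕ) (hp : p.Prime) (P : Type*) [Group P] [Finite P] [Nontrivial P]
    (hP : IsPGroup p P)
    (hrank : ∀ N : Subgroup P, N.Normal → (∀ g ∈ N, g ^ p = 1) →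
      (∀ a ∈ N, ∀ b ∈ N, a * b = b * a) → IsCyclic N) :
    IsCyclic P ∨
    (∃ n : ℕ, 3 ≤ n ∧ Nonempty (P ≃* DihedralGroup (2 ^ n))) ∨
    (∃ n : ℕ, 2 ≤ n ∧ Nonempty (P ≃* QuaternionGroup (2 ^ (n - 1)))) ∨
    (∃ n : ℕ, 3 ≤ n ∧ IsSemidihedral P n) := by
  have : Fact p.Prime := ⟨hp⟩
  have hG : NormalRankLEOne p P := hrank
  obtain ⟨c, hc1, hnormal, hcent⟩ := hG.exists_zpowers_normal_centralizer_le hP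
  obtain ⟨m, hc⟩ := exists_orderOf_eq_pow_succ hP hc1
  by_cases htop : zpowers c = ⊤
  · exact .inl (isCyclic_iff_exists_zpowers_eq_top.2 ⟨c, htop⟩)
  obtain rfl : p = 2 :=
    by_contra fun hp2 => htop (hG.zpowers_eq_top_of_ne_two hP hcent hc hp2)
  obtain ⟨x, -, hx⟩ := SetLike.exists_of_lt (lt_top_iff_ne_top.2 htop)
  rcases hG.dihedral_or_quaternion_or_semidihedral hP hcent hc hx with
    ⟨hm, hdihedral⟩ | ⟨hm, hquaternion⟩ | ⟨hm, hsemidihedral⟩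
  · exact .inr (.inl ⟨m + 1, by lia, hdihedral⟩)
  · exact .inr (.inr (.inl ⟨m + 1, by lia, hquaternion⟩))
  · exact .inr (.inr (.inr ⟨m + 1, by lia, hsemidihedral⟩))
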